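/- Let P = {u ∈ ℝ^n : ⟨u, v_j⟩ − λ_j ≥ 0, j = 1, …, m} and P' = {u ∈ ℝ^n : ⟨u, v_j⟩ − λ'_j ≥ 0, j = 1, …, m} be nonempty compact sets with the same nonzero normal vectors v_1, …, v_m. Fix an index j, and assume there exist p ∈ P with ⟨p, v_j⟩ = λ_j and p' ∈ P' with ⟨p', v_j⟩ = λ'_j. Then the Hausdorff distance satisfies d_H(P, P') ≥ |λ_j − λ'_j| / ‖v_j‖. -/

import Mathlib

noncomputable section

theorem statement6_aux {n : ℕ} (x y w : EuclideanSpace ℝ (Fin n)) :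
    (∑ i, x i * w i) - (∑ i, y i * w i) ≤ dist x y * ‖w‖ := by
  have h := real_inner_le_norm (x - y) w
  rw [dist_eq_norm]
  refine le_trans (le_of_eq ?_) h
  rw [inner_sub_left]
  simp [PiLp.inner_apply, mul_comm]

/-- Let `P` and `P'` be nonempty compact polytopes in Euclidean `ℝ^n` cut out
by the same nonzero normal vectors `v_j` with constants `λ_j`, `λ'_j` respectively. If the `j`-th
inequality is active at some point of each polytope, then
`d_H(P, P') ≥ |λ_j − λ'_j| / ‖v_j‖`. -/
theorem statement6 {n m : ℕ}
    (v : Fin m → EuclideanSpace ℝ (Fin n)) (hv : ∀ j, v j ≠ 0)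
    (lam lam' : Fin m → ℝ)
    (P P' : Set (EuclideanSpace ℝ (Fin n)))
    (hP : P = {u | ∀ j, 0 ≤ (∑ i, u i * v j i) - lam j})
    (hP' : P' = {u | ∀ j, 0 ≤ (∑ i, u i * v j i) - lam' j})
    (hPne : P.Nonempty) (hPc : IsCompact P)
    (hP'ne : P'.Nonempty) (hP'c : IsCompact P')
    (j : Fin m)
    (hact : ∃ p ∈ P, (∑ i, p i * v j i) = lam j)
    (hact' : ∃ p ∈ P', (∑ i, p i * v j i) = lam' j) :
    |lam j - lam' j| / ‖v j‖ ≤ Metric.hausdorffDist P P' := by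
  obtain ⟨p, hp, hpe⟩ := hact
  obtain ⟨p', hp', hpe'⟩ := hact'
  have hw : 0 < ‖v j‖ := norm_pos_iff.mpr (hv j)
  have fin := Metric.hausdorffEDist_ne_top_of_nonempty_of_bounded hPne hP'ne
    hPc.isBounded hP'c.isBounded
  by_contra hcon
  have hlt := not_le.mp hcon
  rcases le_total (lam' j) (lam j) with hle | hle
  · obtain ⟨x, hx, hd⟩ := Metric.exists_dist_lt_of_hausdorffDist_lt' hp' hlt fin
    rw [hP] at hx
    have h1 := hx j
    have h2 := statement6_aux x p' (v j)
    rw [lt_div_iff₀ hw, abs_of_nonneg (sub_nonneg.mpr hle)] at hd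
    linarith
  · obtain ⟨y, hy, hd⟩ := Metric.exists_dist_lt_of_hausdorffDist_lt hp hlt fin
    rw [hP'] at hy
    have h1 := hy j
    have h2 := statement6_aux y p (v j)
    rw [lt_div_iff₀ hw, abs_of_nonpos (sub_nonpos.mpr hle), dist_comm] at hd
    linarith
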